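/- Let α be a type and let A, B be lists over α, both of length 2. Let i ≥ 2 and m ≥ 1 be integers and set k = 2^i·m − 2^{i−1} + 1 (an odd integer). Then d((k+1)/2) < (i−1)·|S_{A,B}(m)|, where d is Stern's diatomic sequence. -/

import Mathlib

/-- Stern's diatomic sequence. -/
def stern : ℕ → ℕ
  | 0 => 0
  | 1 => 1
  | n + 2 =>
    if (n + 2) % 2 = 0 then stern ((n + 2) / 2)
    else stern ((n + 2) / 2) + stern ((n + 2) / 2 + 1)
decreasing_by all_goals omega

/-- OEIS A003602: a(1)=1, a(2n)=a(n), a(2n+1)=n+1. (a(0)=0 as junk value.) -/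
def aseq : ℕ → ℕ
  | 0 => 0
  | 1 => 1
  | n + 2 =>
    if (n + 2) % 2 = 0 then aseq ((n + 2) / 2)
    else (n + 2) / 2 + 1
decreasing_by all_goals omega

-- the modified sequence `a*`: zero at powers of two.
open Classical in
noncomputable def aStar (j : ℕ) : ℕ :=
  if ∃ k, j = 2 ^ k then 0 else aseq j

theorem aseq_le (n : ℕ) : aseq n ≤ n := by
  induction n using Nat.strong_induction_on with
  | _ n ih =>
    match n with
    | 0 => simp [aseq]
    | 1 => simp [aseq]
    | m + 2 =>
      rw [aseq]
      split
      · exact le_trans (ih ((m + 2) / 2) (by omega)) (by omega)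
      · omega

theorem aStar_le (j : ℕ) : aStar j ≤ j := by
  unfold aStar
  split
  · omega
  · exact aseq_le j

/-- The Markov-type sequence `S_{A,B}(n)`. -/
noncomputable def mseq {α : Type*} (A B : List α) : ℕ → List α
  | 0 => A
  | 1 => B
  | 2 => A ++ B
  | n + 3 =>
    if (n + 3) % 2 = 0 then
      mseq A B ((n + 3) / 2) ++ mseq A B (aseq ((n + 3) / 2))
    else
      mseq A B (aStar ((n + 4) / 2 - 1)) ++ mseq A B ((n + 4) / 2)
decreasing_by
  all_goals first
    | omega
    | exact lt_of_le_of_lt (aseq_le _) (by omega)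
    | exact lt_of_le_of_lt (aStar_le _) (by omega)

theorem stern_even (n : ℕ) : stern (2 * n) = stern n := by
  rcases n with _ | n
  · simp
  · rw [show 2 * (n + 1) = 2 * n + 2 by ring, stern, if_pos (by omega)]
    congr 1
    omega

theorem stern_odd (n : ℕ) : stern (2 * n + 1) = stern n + stern (n + 1) := by
  rcases n with _ | n
  · simp [stern]
  · rw [show 2 * (n + 1) + 1 = (2 * n + 1) + 2 by ring, stern, if_neg (by omega)]
    rw [show (2 * n + 1 + 2) / 2 = n + 1 by omega]

theorem aseq_even (n : ℕ) : aseq (2 * n) = aseq n := by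
  rcases n with _ | n
  · simp
  · rw [show 2 * (n + 1) = 2 * n + 2 by ring, aseq, if_pos (by omega)]
    congr 1
    omega

theorem aseq_odd (n : ℕ) : aseq (2 * n + 1) = n + 1 := by
  rcases n with _ | n
  · simp [aseq]
  · rw [show 2 * (n + 1) + 1 = (2 * n + 1) + 2 by ring, aseq, if_neg (by omega)]
    omega

theorem stern_pos (n : ℕ) (h : 1 ≤ n) : 1 ≤ stern n := by
  induction n using Nat.strong_induction_on with
  | _ n ih =>
    obtain ⟨k, rfl | rfl⟩ := Nat.even_or_odd' n
    · rw [stern_even]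
      exact ih k (by omega) (by omega)
    · rw [stern_odd]
      rcases k with _ | k
      · simp [stern]
      · have := ih (k + 1) (by omega) (by omega)
        omega

theorem aseq_spec (n : ℕ) (h : 1 ≤ n) : 1 ≤ aseq n ∧ stern (2 * aseq n - 1) = stern n := by
  induction n using Nat.strong_induction_on with
  | _ n ih =>
    obtain ⟨k, rfl | rfl⟩ := Nat.even_or_odd' n
    · rw [stern_even, aseq_even]
      exact ih k (by omega) (by omega)
    · rw [aseq_odd]
      exact ⟨by omega, by congr 1⟩

theorem stern_two_pow (k : ℕ) : stern (2 ^ k) = 1 := by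
  induction k with
  | zero => simp [stern]
  | succ k ih => rw [pow_succ', stern_even, ih]

theorem stern_pow_mul (j n : ℕ) : stern (2 ^ j * n + 1) = j * stern n + stern (n + 1) := by
  induction j with
  | zero => simp
  | succ j ih =>
    have h : stern (2 ^ j * n) = stern n := by
      clear ih
      induction j with
      | zero => simp
      | succ j ih => rw [pow_succ', mul_assoc, stern_even, ih]
    rw [pow_succ', mul_assoc, stern_odd, ih, h]
    ring

theorem mseq_length {α : Type*} (A B : List α) (hA : A.length = 2) (hB : B.length = 2)
    (m : ℕ) (hm : 1 ≤ m) : (mseq A B m).length = 2 * stern (2 * m - 1) := by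
  induction m using Nat.strong_induction_on with
  | _ m ih =>
    match m, hm with
    | 1, _ => simp [mseq, stern, hB]
    | 2, _ => simp [mseq, stern, hA, hB]
    | n + 3, _ =>
      rw [mseq]
      split
      · obtain ⟨j, hj⟩ : ∃ j, n + 3 = 2 * j := ⟨(n + 3) / 2, by omega⟩
        have e : (n + 3) / 2 = j := by omega
        obtain ⟨h1, h2⟩ := aseq_spec j (by omega)
        have h3 := aseq_le j
        rw [e, List.length_append, ih j (by omega) (by omega), ih (aseq j) (by omega) h1, h2,
          show 2 * (n + 3) - 1 = 2 * (2 * j - 1) + 1 by omega, stern_odd,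
          show 2 * j - 1 + 1 = 2 * j by omega, stern_even]
        ring
      · obtain ⟨j, hj⟩ : ∃ j, n + 3 = 2 * j + 1 := ⟨(n + 3) / 2, by omega⟩
        have e : (n + 4) / 2 = j + 1 := by omega
        have h : (mseq A B (aStar j)).length = 2 * stern j := by
          unfold aStar
          split
          · rename_i h
            obtain ⟨k, rfl⟩ := h
            rw [stern_two_pow, mseq, hA]
          · obtain ⟨h1, h2⟩ := aseq_spec j (by omega)
            have h3 := aseq_le j
            rw [ih (aseq j) (by omega) h1, h2]
        rw [e, Nat.add_sub_cancel, List.length_append, h, ih (j + 1) (by omega) (by omega),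
          show 2 * (n + 3) - 1 = 2 * (2 * j) + 1 by omega, stern_odd, stern_even,
          show 2 * (j + 1) - 1 = 2 * j + 1 by omega]
        ring

/-- for `A`, `B` of length 2, `i ≥ 2`, `m ≥ 1` and
`k = 2^i·m − 2^{i−1} + 1`, one has `d((k+1)/2) < (i−1)·|S_{A,B}(m)|`. -/
theorem stmt15 {α : Type*} (A B : List α) (hA : A.length = 2) (hB : B.length = 2)
    (i m : ℕ) (hi : 2 ≤ i) (hm : 1 ≤ m) :
    stern ((2 ^ i * m - 2 ^ (i - 1) + 1 + 1) / 2) < (i - 1) * (mseq A B m).length := by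
  obtain ⟨j, rfl⟩ : ∃ j, i = j + 2 := ⟨i - 2, by omega⟩
  obtain ⟨n, rfl⟩ : ∃ n, m = n + 1 := ⟨m - 1, by omega⟩
  have e : (2 ^ (j + 2) * (n + 1) - 2 ^ (j + 2 - 1) + 1 + 1) / 2 = 2 ^ j * (2 * n + 1) + 1 := by
    have h1 : 2 ^ (j + 2) * (n + 1) = 2 * (2 ^ j * (2 * n + 1)) + 2 ^ (j + 1) := by ring
    rw [show j + 2 - 1 = j + 1 by omega, h1]
    omega
  rw [e, stern_pow_mul, mseq_length A B hA hB _ hm, show 2 * (n + 1) - 1 = 2 * n + 1 by omega,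
    show 2 * n + 1 + 1 = 2 * (n + 1) by ring, stern_even, show j + 2 - 1 = j + 1 by omega]
  have h1 := stern_pos (2 * n + 1) (by omega)
  have h2 : stern (n + 1) ≤ stern (2 * n + 1) := by rw [stern_odd]; omega
  nlinarith [Nat.zero_le (j * stern (2 * n + 1))]
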